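/- For the SBIP algorithm under the noisy linear model, conditioned on the event E^SBIP, the instantaneous regret of the posted price p_t = x_tᵀθ̂^s_t + k_t ε is bounded as follows: if round t was charged to the seller-side counter of grid point k (i.e., t ∈ T^SE_{s,k}, meaning k_t = k and N^{s,k}_t was minimal over the surviving set), then Δ(x_t, p_t) ≤ (50PL + 28)ε + 16P√(2 log(1/δ)/N^{s,k}_t); similarly, if t ∈ T^SE_{b,k'} then Δ(x_t, p_t) ≤ (50PL + 28)ε + 16P√(2 log(1/δ)/N^{b,k'}_t), where Δ(x,p) = max_{p'} EGFT(x,p') − EGFT(x,p). -/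

import Mathlib

/-!
By independence, the gain from trade at a price `q` equals `F(y) I(z) + D(z) J(y)`, where
`y = q - xᵀθˢ` and `z = q - xᵀθᵇ` (`egft_factor`). The confidence index at a grid pair plugs
estimates of `F`, `D`, `I`, `J` at nearby grid points into this formula, and the Lipschitz bounds
(`L` for `F` and `D`, `1` for `I` and `J`) control the error. The required constants come from
`J(y) ≤ max C y` and its mirror image for `I`, which rest on the noises being centered.

Only prices with `I, J` safely below `2P` admit this error bound for arbitrary widths
(`index_error_interior`). At the edge of the grid the gain from trade vanishes, and the bound still
holds provided `ε` is small compared with `P` and `C` and the widths are at most `1/8`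
(`index_error_edge`). These provisos are harmless: the gain from trade lies in `[0, 2P]` and
`1 ≤ 2CL`, so if they fail for the selected pair the claimed regret bound is at least `2P`.

Given any price `q`, the comparison pair is the first grid price not below `q`; moving there costs at
most `2PLε` (`egft_increase`). If it survives elimination, its widths are at most the width `w` of
the selected pair's smaller count, and `UCB(k_t) ≥ LCB(k)` loses four times `(12PL+7)ε + 4Pw`.
If it was eliminated, its upper bound lies below some lower bound, hence below `UCB(k_t)`, which is
even better.
-/

open MeasureTheory ProbabilityTheory Set
open scoped InnerProductSpace

/-- The properties of a distribution function `F` and of its integral `J y = ∫_{-C}^y F` that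
the argument uses, for a centered law on `[-C, C]` with density at most `L`. The buyer's side is
treated by the same notion, applied to the reflected noise `-ξb`. -/
structure CdfFacts (C L : ℝ) (F J : ℝ → ℝ) : Prop where
  nonneg : ∀ u, 0 ≤ F u
  le_one : ∀ u, F u ≤ 1
  mono : Monotone F
  lip : ∀ u v, v ≤ u → F u - F v ≤ L * (u - v)
  zero : ∀ u, u < -C → F u = 0
  J_nonneg : ∀ u, 0 ≤ J u
  J_zero : ∀ u, u < -C → J u = 0
  J_lower : ∀ u v, v ≤ u → (u - v) * F v ≤ J u - J v
  J_upper : ∀ u v, v ≤ u → J u - J v ≤ (u - v) * F u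
  J_le : ∀ u, J u ≤ max C u

namespace CdfFacts

variable {C L : ℝ} {F J : ℝ → ℝ}

lemma abs_lip (h : CdfFacts C L F J) (hL : 0 ≤ L) {u v r : ℝ} (huv : |u - v| ≤ r) :
    |F u - F v| ≤ L * r := by
  have hr : L * |u - v| ≤ L * r := mul_le_mul_of_nonneg_left huv hL
  refine le_trans ?_ hr
  rcases le_total v u with hvu | hvu
  · rw [abs_of_nonneg (sub_nonneg.2 (h.mono hvu)), abs_of_nonneg (sub_nonneg.2 hvu)]
    exact h.lip u v hvu
  · rw [abs_sub_comm, abs_sub_comm u v, abs_of_nonneg (sub_nonneg.2 (h.mono hvu)),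
      abs_of_nonneg (sub_nonneg.2 hvu)]
    exact h.lip v u hvu

lemma J_mono (h : CdfFacts C L F J) : Monotone J := fun v u hvu => by
  have := h.J_lower u v hvu
  have := mul_nonneg (sub_nonneg.2 hvu) (h.nonneg v)
  linarith

lemma abs_J_lip (h : CdfFacts C L F J) {u v r : ℝ} (huv : |u - v| ≤ r) :
    |J u - J v| ≤ r := by
  refine le_trans ?_ huv
  rcases le_total v u with hvu | hvu
  · rw [abs_of_nonneg (sub_nonneg.2 (h.J_mono hvu)), abs_of_nonneg (sub_nonneg.2 hvu)]
    exact (h.J_upper u v hvu).trans (mul_le_of_le_one_right (sub_nonneg.2 hvu) (h.le_one u))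
  · rw [abs_sub_comm, abs_sub_comm u v, abs_of_nonneg (sub_nonneg.2 (h.J_mono hvu)),
      abs_of_nonneg (sub_nonneg.2 hvu)]
    exact (h.J_upper v u hvu).trans (mul_le_of_le_one_right (sub_nonneg.2 hvu) (h.le_one v))

end CdfFacts

/-- Layer cake: `∫_{-C}^y P(X ≤ u) du = E[(y - X)⁺]`, also for `y < -C`, where both vanish. -/
lemma integral_cdf_eq {Ω : Type*} [MeasurableSpace Ω] {Pr : Measure Ω} [IsProbabilityMeasure Pr]
    {X : Ω → ℝ} (hX : Measurable X) {C : ℝ} (hC : ∀ᵐ ω ∂Pr, X ω ∈ Icc (-C) C) (y : ℝ) :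
    ∫ u in (-C)..y, (Pr {ω | X ω ≤ u}).toReal = ∫ ω, max (y - X ω) 0 ∂Pr := by
  rcases le_or_gt (-C) y with hy | hy
  · have hint : Integrable (fun ω => max (y - X ω) 0) Pr := by
      refine Integrable.of_bound (by fun_prop) (y + C) ?_
      filter_upwards [hC] with ω hω
      rw [Real.norm_of_nonneg (le_max_right _ _)]
      exact max_le (by linarith [hω.1]) (by linarith)
    rw [hint.integral_eq_integral_Ioc_meas_le (M := y + C)
      (Filter.Eventually.of_forall fun ω => le_max_right _ _)
      (by filter_upwards [hC] with ω hω
          exact max_le (by linarith [hω.1]) (by linarith)),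
      ← intervalIntegral.integral_of_le (by linarith)]
    have h1 : ∫ t in (0:ℝ)..(y + C), Pr.real {a | t ≤ max (y - X a) 0}
        = ∫ t in (0:ℝ)..(y + C), (fun u => (Pr {ω | X ω ≤ u}).toReal) (y - t) := by
      rw [intervalIntegral.integral_of_le (by linarith),
        intervalIntegral.integral_of_le (by linarith)]
      refine setIntegral_congr_fun measurableSet_Ioc fun t ht => ?_
      simp only [Measure.real]
      congr 2
      ext ω
      simp only [mem_ofPred_eq, le_max_iff]
      constructor
      · rintro (h | h)
        · linarith
        · linarith [ht.1]
      · intro h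
        left; linarith
    rw [h1, intervalIntegral.integral_comp_sub_left (fun u => (Pr {ω | X ω ≤ u}).toReal) y]
    congr 1 <;> ring
  · have h1 : ∫ ω, max (y - X ω) 0 ∂Pr = 0 := by
      rw [integral_congr_ae (g := fun _ => (0:ℝ)), integral_zero]
      filter_upwards [hC] with ω hω
      exact max_eq_right (by linarith [hω.1])
    rw [h1, intervalIntegral.integral_symm, intervalIntegral.integral_of_le hy.le,
      integral_Ioc_eq_integral_Ioo, neg_eq_zero]
    rw [setIntegral_congr_fun (g := fun _ => (0:ℝ)) measurableSet_Ioo, integral_zero]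
    intro u hu
    have : Pr {ω | X ω ≤ u} = 0 := by
      have h2 : ∀ᵐ ω ∂Pr, ¬ X ω ≤ u := by
        filter_upwards [hC] with ω hω
        linarith [hω.1, hu.2]
      simpa [ae_iff] using h2
    simp [this]

lemma cdfFacts_of_law {Ω : Type*} [MeasurableSpace Ω] {Pr : Measure Ω} [IsProbabilityMeasure Pr]
    {X : Ω → ℝ} (hX : Measurable X) {C L : ℝ} (hL : 0 ≤ L)
    (hC : ∀ᵐ ω ∂Pr, X ω ∈ Icc (-C) C)
    (hlaw : ∀ S, MeasurableSet S → Pr (X ⁻¹' S) ≤ ENNReal.ofReal L * volume S)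
    (hcent : ∫ ω, X ω ∂Pr = 0) {F J : ℝ → ℝ}
    (hF : ∀ u, F u = (Pr {ω | X ω ≤ u}).toReal)
    (hJ : ∀ y, J y = ∫ u in (-C)..y, F u) : CdfFacts C L F J := by
  have hF' : F = fun u => (Pr {ω | X ω ≤ u}).toReal := funext hF
  have hmono : Monotone F := fun v u hvu => by
    rw [hF, hF]
    exact ENNReal.toReal_mono (measure_ne_top _ _) (measure_mono fun ω hω => le_trans hω hvu)
  have hone : ∀ u, F u ≤ 1 := fun u => by
    rw [hF]; exact measureReal_le_one
  have hJe : ∀ y, J y = ∫ ω, max (y - X ω) 0 ∂Pr := fun y => by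
    rw [hJ, hF', integral_cdf_eq hX hC]
  have hXi : Integrable X Pr := by
    refine Integrable.of_bound hX.aestronglyMeasurable C ?_
    filter_upwards [hC] with ω hω
    exact abs_le.2 hω
  have hJdiff : ∀ u v, J u - J v = ∫ t in v..u, F t := fun u v => by
    rw [hJ, hJ]
    exact intervalIntegral.integral_interval_sub_left hmono.intervalIntegrable
      hmono.intervalIntegrable
  refine ⟨fun u => by rw [hF]; positivity, hone, hmono, ?_, ?_, ?_, ?_, ?_, ?_, ?_⟩
  · intro u v hvu
    have hset : {ω | X ω ≤ u} = {ω | X ω ≤ v} ∪ X ⁻¹' Ioc v u := by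
      ext ω
      simp only [mem_ofPred_eq, mem_union, mem_preimage, mem_Ioc]
      constructor
      · intro h
        rcases le_or_gt (X ω) v with h' | h'
        · exact Or.inl h'
        · exact Or.inr ⟨h', h⟩
      · rintro (h | h)
        · exact h.trans hvu
        · exact h.2
    have h1 : Pr.real {ω | X ω ≤ u} ≤ Pr.real {ω | X ω ≤ v} + Pr.real (X ⁻¹' Ioc v u) := by
      rw [hset]; exact measureReal_union_le _ _
    have h2 : Pr.real (X ⁻¹' Ioc v u) ≤ L * (u - v) := by
      have := hlaw (Ioc v u) measurableSet_Ioc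
      rw [Real.volume_Ioc, ← ENNReal.ofReal_mul hL] at this
      exact ENNReal.toReal_le_of_le_ofReal (mul_nonneg hL (sub_nonneg.2 hvu)) this
    rw [hF, hF]
    simp only [Measure.real] at h1 h2
    linarith
  · intro u hu
    have : Pr {ω | X ω ≤ u} = 0 := by
      have h2 : ∀ᵐ ω ∂Pr, ¬ X ω ≤ u := by
        filter_upwards [hC] with ω hω
        linarith [hω.1]
      simpa [ae_iff] using h2
    simp [hF, this]
  · intro u
    rw [hJe]
    exact integral_nonneg fun ω => le_max_right _ _
  · intro u hu
    rw [hJe, integral_congr_ae (g := fun _ => (0:ℝ)), integral_zero]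
    filter_upwards [hC] with ω hω
    exact max_eq_right (by linarith [hω.1])
  · intro u v hvu
    rw [hJdiff]
    have := intervalIntegral.integral_mono_on hvu (μ := volume) (f := fun _ => F v) (g := F)
      intervalIntegrable_const hmono.intervalIntegrable (fun t ht => hmono ht.1)
    simpa using this
  · intro u v hvu
    rw [hJdiff]
    have := intervalIntegral.integral_mono_on hvu (μ := volume) (f := F) (g := fun _ => F u)
      hmono.intervalIntegrable intervalIntegrable_const (fun t ht => hmono ht.2)
    simpa using this
  · intro u
    -- Centering enters here: `(u - X)⁺ ≤ max C u - X`, and `E[X] = 0`.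
    rw [hJe]
    calc ∫ ω, max (u - X ω) 0 ∂Pr ≤ ∫ ω, (max C u - X ω) ∂Pr := by
          refine integral_mono_of_nonneg (Filter.Eventually.of_forall fun ω => le_max_right _ _)
            ((integrable_const _).sub hXi) ?_
          filter_upwards [hC] with ω hω
          exact max_le (by linarith [le_max_right C u]) (by linarith [le_max_left C u, hω.2])
      _ = max C u := by
          rw [integral_sub (integrable_const _) hXi, hcent]; simp

lemma law_le {Ω : Type*} [MeasurableSpace Ω] {Pr : Measure Ω}
    {X : Ω → ℝ} (hX : Measurable X) {L : ℝ} {f : ℝ → ℝ} (hfL : ∀ u, f u ≤ L)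
    (hlaw : Measure.map X Pr = volume.withDensity (fun u => ENNReal.ofReal (f u)))
    (S : Set ℝ) (hS : MeasurableSet S) : Pr (X ⁻¹' S) ≤ ENNReal.ofReal L * volume S := by
  rw [← Measure.map_apply hX hS, hlaw, withDensity_apply _ hS]
  calc ∫⁻ u in S, ENNReal.ofReal (f u) ≤ ∫⁻ _ in S, ENNReal.ofReal L :=
        lintegral_mono fun u => ENNReal.ofReal_le_ofReal (hfL u)
    _ = _ := by simp

lemma law_supp {Ω : Type*} [MeasurableSpace Ω] {Pr : Measure Ω}
    {X : Ω → ℝ} (hX : Measurable X) {C : ℝ} {f : ℝ → ℝ} (hf : ∀ u, u ∉ Icc (-C) C → f u = 0)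
    (hlaw : Measure.map X Pr = volume.withDensity (fun u => ENNReal.ofReal (f u))) :
    ∀ᵐ ω ∂Pr, X ω ∈ Icc (-C) C := by
  have h : Pr (X ⁻¹' (Icc (-C) C)ᶜ) = 0 := by
    rw [← Measure.map_apply hX measurableSet_Icc.compl, hlaw,
      withDensity_apply _ measurableSet_Icc.compl,
      setLIntegral_congr_fun (g := fun _ => 0) measurableSet_Icc.compl
        (fun u hu => by simp [hf u hu])]
    simp
  exact h

/-- A density bounded by `L` on `[-C, C]` has total mass at most `2CL`. -/
lemma one_le_of_law {Ω : Type*} [MeasurableSpace Ω] {Pr : Measure Ω} [IsProbabilityMeasure Pr]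
    {X : Ω → ℝ} {C L : ℝ} (hL : 0 ≤ L)
    (hC : ∀ᵐ ω ∂Pr, X ω ∈ Icc (-C) C)
    (hlaw : ∀ S, MeasurableSet S → Pr (X ⁻¹' S) ≤ ENNReal.ofReal L * volume S) :
    0 ≤ C ∧ 1 ≤ 2 * C * L := by
  have h1 : Pr (X ⁻¹' Icc (-C) C) = 1 := by
    have : X ⁻¹' Icc (-C) C =ᵐ[Pr] (univ : Set Ω) := by
      filter_upwards [hC] with ω hω
      exact propext ⟨fun _ => trivial, fun _ => hω⟩
    rw [measure_congr this, measure_univ]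
  have h2 := hlaw _ (measurableSet_Icc (a := -C) (b := C))
  have hC0 : 0 ≤ C := by
    obtain ⟨ω, hω⟩ := hC.exists
    linarith [hω.1, hω.2]
  rw [h1, Real.volume_Icc, ← ENNReal.ofReal_mul hL, ENNReal.one_le_ofReal] at h2
  exact ⟨hC0, by linarith⟩

/-- The gain from trade factorizes by independence, since `b - s = (b - q) + (q - s)`. Here
`y = q - xᵀθˢ` and `z = xᵀθᵇ - q` are the thresholds for `ξs` and for `-ξb`. -/
lemma egft_factor {Ω : Type*} [MeasurableSpace Ω] {Pr : Measure Ω} [IsProbabilityMeasure Pr]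
    {ξs ξb : Ω → ℝ} (hs : Measurable ξs) (hb : Measurable ξb) (hind : IndepFun ξs ξb Pr) {C : ℝ}
    (hCs : ∀ᵐ ω ∂Pr, ξs ω ∈ Icc (-C) C) (hCb : ∀ᵐ ω ∂Pr, ξb ω ∈ Icc (-C) C) (ms mb q : ℝ) :
    ∫ ω, (if ms + ξs ω ≤ q ∧ q ≤ mb + ξb ω then (mb + ξb ω) - (ms + ξs ω) else 0) ∂Pr
      = (Pr {ω | ξs ω ≤ q - ms}).toReal * (∫ ω, max ((mb - q) - (-ξb ω)) 0 ∂Pr)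
        + (Pr {ω | -ξb ω ≤ mb - q}).toReal * (∫ ω, max ((q - ms) - ξs ω) 0 ∂Pr) := by
  set y := q - ms with hy
  set z := mb - q with hz
  let f1 : ℝ → ℝ := (Iic y).indicator 1
  let f2 : ℝ → ℝ := fun t => max (y - t) 0
  let g1 : ℝ → ℝ := fun t => max (z - (-t)) 0
  let g2 : ℝ → ℝ := (Ici (-z)).indicator 1
  have mf1 : Measurable f1 := measurable_one.indicator measurableSet_Iic
  have mg2 : Measurable g2 := measurable_one.indicator measurableSet_Ici
  have mf2 : Measurable f2 := by fun_prop
  have mg1 : Measurable g1 := by fun_prop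
  have e1 : ∫ ω, f1 (ξs ω) ∂Pr = (Pr {ω | ξs ω ≤ y}).toReal := by
    have : (fun ω => f1 (ξs ω)) = ({ω | ξs ω ≤ y}).indicator 1 := by
      ext ω; simp [f1, indicator]
    rw [this, integral_indicator_one (measurableSet_le hs measurable_const)]; rfl
  have e2 : ∫ ω, g2 (ξb ω) ∂Pr = (Pr {ω | -ξb ω ≤ z}).toReal := by
    have : (fun ω => g2 (ξb ω)) = ({ω | -ξb ω ≤ z}).indicator 1 := by
      ext ω; simp [g2, indicator, neg_le]
    rw [this, integral_indicator_one (by exact measurableSet_le hb.neg measurable_const)]; rfl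
  have b1 : ∀ t, |f1 t| ≤ 1 := fun t => by
    by_cases h : t ≤ y <;> simp [f1, h]
  have b2 : ∀ t, |g2 t| ≤ 1 := fun t => by
    by_cases h : -z ≤ t <;> simp [g2, h]
  have i1 : Integrable (fun ω => f1 (ξs ω) * g1 (ξb ω)) Pr := by
    refine Integrable.of_bound
      ((mf1.comp hs).mul (mg1.comp hb)).aestronglyMeasurable (|z| + C) ?_
    filter_upwards [hCb] with ω hω
    have h2 : |g1 (ξb ω)| ≤ |z| + C := by
      have := le_abs_self z
      have := abs_nonneg z
      rw [abs_of_nonneg (le_max_right _ _)]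
      exact max_le (by linarith [hω.2]) (by linarith [hω.1, hω.2])
    rw [Real.norm_eq_abs, abs_mul]
    nlinarith [b1 (ξs ω), abs_nonneg (f1 (ξs ω)), abs_nonneg (g1 (ξb ω))]
  have i2 : Integrable (fun ω => f2 (ξs ω) * g2 (ξb ω)) Pr := by
    refine Integrable.of_bound
      ((mf2.comp hs).mul (mg2.comp hb)).aestronglyMeasurable (|y| + C) ?_
    filter_upwards [hCs] with ω hω
    have h2 : |f2 (ξs ω)| ≤ |y| + C := by
      have := le_abs_self y
      have := abs_nonneg y
      rw [abs_of_nonneg (le_max_right _ _)]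
      exact max_le (by linarith [hω.1]) (by linarith [hω.1, hω.2])
    rw [Real.norm_eq_abs, abs_mul]
    nlinarith [b2 (ξb ω), abs_nonneg (g2 (ξb ω)), abs_nonneg (f2 (ξs ω))]
  have hsplit : ∀ ω, (if ms + ξs ω ≤ q ∧ q ≤ mb + ξb ω then (mb + ξb ω) - (ms + ξs ω) else 0)
      = f1 (ξs ω) * g1 (ξb ω) + f2 (ξs ω) * g2 (ξb ω) := fun ω => by
    by_cases h1 : ξs ω ≤ y
    · by_cases h2 : -z ≤ ξb ω
      · rw [if_pos ⟨by linarith, by linarith⟩]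
        simp only [f1, g1, f2, g2, indicator, mem_Iic, mem_Ici, h1, h2, if_true, Pi.one_apply]
        rw [max_eq_left (by linarith), max_eq_left (by linarith)]
        rw [hy, hz]; ring
      · rw [if_neg (fun h => h2 (by linarith [h.2]))]
        simp only [f1, g1, f2, g2, indicator, mem_Iic, mem_Ici, h1, h2, if_true, if_false]
        rw [max_eq_right (a := z - -ξb ω) (by linarith)]
        simp
    · rw [if_neg (fun h => h1 (by linarith [h.1]))]
      simp only [f1, f2, indicator, mem_Iic, h1, if_false]
      rw [max_eq_right (a := y - ξs ω) (by linarith)]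
      simp
  simp_rw [hsplit]
  rw [integral_add i1 i2]
  have k1 := (hind.comp mf1 mg1).integral_fun_mul_eq_mul_integral
    (mf1.comp hs).aestronglyMeasurable (mg1.comp hb).aestronglyMeasurable
  have k2 := (hind.comp mf2 mg2).integral_fun_mul_eq_mul_integral
    (mf2.comp hs).aestronglyMeasurable (mg2.comp hb).aestronglyMeasurable
  simp only [Function.comp_apply] at k1 k2
  rw [k1, k2, e1, e2, mul_comm (∫ ω, f2 (ξs ω) ∂Pr)]

lemma abs_mul_sub_mul_le {a b c d p q r s : ℝ} (ha : |a| ≤ p) (hbd : |b - d| ≤ q)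
    (hd : |d| ≤ r) (hac : |a - c| ≤ s) : |a * b - c * d| ≤ p * q + s * r := by
  have : a * b - c * d = a * (b - d) + (a - c) * d := by ring
  rw [this]
  refine (abs_add_le _ _).trans (add_le_add ?_ ?_)
  · rw [abs_mul]; exact mul_le_mul ha hbd (abs_nonneg _) ((abs_nonneg _).trans ha)
  · rw [abs_mul]; exact mul_le_mul hac hd (abs_nonneg _) ((abs_nonneg _).trans hac)

/-- Accuracy of the index at grid points away from the edge of the grid, where both integral
estimates are at most `2P`. No bound on the confidence widths `wF`, `wD` is needed. -/
lemma index_error_interior {C L P ε : ℝ} {F J D I : ℝ → ℝ} (hF : CdfFacts C L F J)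
    (hD : CdfFacts C L D I) (hL : 0 ≤ L) (hCP : C + 2 * ε ≤ 2 * P)
    {a b y z Fh Dh Ih Jh wF wD : ℝ} (hya : |y - a| ≤ ε) (hzb : |z - b| ≤ 2 * ε)
    (ha : a ≤ 2 * P - 2 * ε) (hb : b ≤ 2 * P - 2 * ε)
    (hFh : |Fh - F a| ≤ wF + L * ε) (hDh : |Dh - D b| ≤ wD + 2 * L * ε)
    (hIh : |Ih - I b| ≤ 2 * ε) (hJh : |Jh - J a| ≤ 2 * ε) :
    |(Ih * Fh + Jh * Dh) - (F y * I z + D z * J y)|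
      ≤ (12 * P * L + 7) * ε + 2 * P * (wF + wD) := by
  have hε : 0 ≤ ε := (abs_nonneg _).trans hya
  have aF : ∀ u, |F u| ≤ 1 := fun u => by
    rw [abs_of_nonneg (hF.nonneg u)]; exact hF.le_one u
  have aD : ∀ u, |D u| ≤ 1 := fun u => by
    rw [abs_of_nonneg (hD.nonneg u)]; exact hD.le_one u
  have aI : I b ≤ 2 * P - 2 * ε := (hD.J_le b).trans (max_le (by linarith) hb)
  have aJ : J a ≤ 2 * P - 2 * ε := (hF.J_le a).trans (max_le (by linarith) ha)
  have nI := hD.J_nonneg b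
  have nJ := hF.J_nonneg a
  have aIh : |Ih| ≤ 2 * P := by
    have := abs_le.1 hIh; exact abs_le.2 ⟨by linarith, by linarith⟩
  have aJh : |Jh| ≤ 2 * P := by
    have := abs_le.1 hJh; exact abs_le.2 ⟨by linarith, by linarith⟩
  have aI' : |I b| ≤ 2 * P := abs_le.2 ⟨by linarith, by linarith⟩
  have aJ' : |J a| ≤ 2 * P := abs_le.2 ⟨by linarith, by linarith⟩
  have t1 := abs_mul_sub_mul_le aIh hFh (aF a) hIh
  have t2 := abs_mul_sub_mul_le aJh hDh (aD b) hJh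
  have t3 := abs_mul_sub_mul_le aI' (hF.abs_lip hL (by rwa [abs_sub_comm] : |a - y| ≤ ε)) (aF y)
    (hD.abs_J_lip (by rwa [abs_sub_comm] : |b - z| ≤ 2 * ε))
  have t4 := abs_mul_sub_mul_le aJ' (hD.abs_lip hL (by rwa [abs_sub_comm] : |b - z| ≤ 2 * ε))
    (aD z) (hF.abs_J_lip (by rwa [abs_sub_comm] : |a - y| ≤ ε))
  rw [abs_le] at t1 t2 t3 t4 ⊢
  constructor <;> nlinarith

/-- Size of the index at the edge of the grid, where one side never trades: there `I` and `D` (or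
`J` and `F`) vanish, and so does the gain from trade. The other integral estimate, `Jh` here, may
exceed `2P`, by at most `6ε`, and the excess is absorbed because the width `wD` multiplying it is at
most `1/8`. The constants `κ`, `κ'` account for the different precisions of the estimates of the two
distribution functions. -/
lemma index_error_edge {L P ε : ℝ} (hL : 0 ≤ L) (hε : 0 ≤ ε) (hεP : 14 * ε ≤ P)
    {f i j κ κ' Fh Dh Ih Jh wF wD : ℝ} (hκ : κ ≤ 2) (hκ' : κ' ≤ 2)
    (hf0 : 0 ≤ f) (hf1 : f ≤ 1) (hi : i = 0)
    (hj0 : 0 ≤ j) (hj : j ≤ 2 * P + 4 * ε) (hwF0 : 0 ≤ wF) (hwD : wD ≤ 1 / 8)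
    (hFh : |Fh - f| ≤ wF + κ * L * ε) (hDh : |Dh| ≤ wD + κ' * L * ε)
    (hIh : |Ih - i| ≤ 2 * ε) (hJh : |Jh - j| ≤ 2 * ε) :
    |Ih * Fh + Jh * Dh| ≤ (12 * P * L + 7) * ε + 2 * P * (wF + wD) := by
  subst hi
  rw [sub_zero] at hIh
  have hLε : 0 ≤ L * ε := mul_nonneg hL hε
  have b1 : |Fh| ≤ 1 + wF + 2 * (L * ε) := by
    have := abs_le.1 hFh
    exact abs_le.2 ⟨by nlinarith, by nlinarith⟩
  have b2 : |Dh| ≤ wD + 2 * (L * ε) := hDh.trans (by nlinarith)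
  have b3 : |Jh| ≤ 2 * P + 6 * ε := by
    have := abs_le.1 hJh
    exact abs_le.2 ⟨by linarith, by linarith⟩
  have t1 : |Ih * Fh| ≤ 2 * ε * (1 + wF + 2 * (L * ε)) := by
    rw [abs_mul]; exact mul_le_mul hIh b1 (abs_nonneg _) (by linarith)
  have t2 : |Jh * Dh| ≤ (2 * P + 6 * ε) * (wD + 2 * (L * ε)) := by
    rw [abs_mul]; exact mul_le_mul b3 b2 (abs_nonneg _) (by linarith)
  refine (abs_add_le _ _).trans ((add_le_add t1 t2).trans ?_)
  have e1 : ε * wF ≤ P * wF := mul_le_mul_of_nonneg_right (by linarith) hwF0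
  have e2 : ε * wD ≤ ε * (1 / 8) := mul_le_mul_of_nonneg_left hwD hε
  have e3 : 14 * ε * (L * ε) ≤ P * (L * ε) := mul_le_mul_of_nonneg_right hεP hLε
  nlinarith

/-- One-sided Lipschitz bound for the gain from trade under a price increase `h`: the terms
`± h F(y) D(z)` coming from the two integrals cancel. -/
lemma egft_increase {C L P : ℝ} {F J D I : ℝ → ℝ} (hF : CdfFacts C L F J)
    (hD : CdfFacts C L D I) (hL : 0 ≤ L) (hCP : C ≤ 2 * P) {y z h ε : ℝ} (hh : 0 ≤ h) (hhε : h ≤ ε)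
    (hy : y + h ≤ 2 * P) :
    (F y * I z + D z * J y) - (F (y + h) * I (z - h) + D (z - h) * J (y + h))
      ≤ 2 * P * L * ε := by
  have a1 : I z - I (z - h) ≤ h * D z := by
    have := hD.J_upper z (z - h) (by linarith)
    linarith
  have a2 : h * F y ≤ J (y + h) - J y := by
    have := hF.J_lower (y + h) y (by linarith)
    linarith
  have a3 : D z - D (z - h) ≤ L * ε := by
    have := hD.lip z (z - h) (by linarith)
    have := mul_le_mul_of_nonneg_left hhε hL
    linarith
  have a4 : J (y + h) ≤ 2 * P := (hF.J_le _).trans (max_le hCP hy)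
  have b1 : F y * (I z - I (z - h)) ≤ F y * (h * D z) :=
    mul_le_mul_of_nonneg_left a1 (hF.nonneg y)
  have b2 : D z * (h * F y) ≤ D z * (J (y + h) - J y) :=
    mul_le_mul_of_nonneg_left a2 (hD.nonneg z)
  have b3 : F y * I (z - h) ≤ F (y + h) * I (z - h) :=
    mul_le_mul_of_nonneg_right (hF.mono (by linarith)) (hD.J_nonneg _)
  have b4 : (D z - D (z - h)) * J (y + h) ≤ (L * ε) * (2 * P) :=
    mul_le_mul a3 a4 (hF.J_nonneg _) (mul_nonneg hL (hh.trans hhε))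
  linarith

/-- Lemma 9 of the paper: on the event `E^SBIP`, the instantaneous regret
of the price posted by the successive-elimination step of SBIP is controlled by the
count of the grid increment it was charged to: if the selected pair `(k,k')` of the
surviving set has the (overall minimal) seller-side counter, then
`Δ(x, p_t) ≤ (50PL + 28)ε + 16P√(2 log(1/δ)/N^{s,k})`, and symmetrically on the buyer
side. Here `Δ(x,p) = max_{p'} EGFT(x,p') − EGFT(x,p)`. -/
theorem stmt_19
    {d : ℕ} (A B C L : ℝ)
    (P : ℝ) (hP : P = C + A * B)
    {Ω : Type*} [MeasurableSpace Ω] (Pr : Measure Ω) [IsProbabilityMeasure Pr]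
    (ξs ξb : Ω → ℝ) (hmξs : Measurable ξs) (hmξb : Measurable ξb)
    (hindep : IndepFun ξs ξb Pr)
    (fs fb : ℝ → ℝ)
    (hfs0 : ∀ u, 0 ≤ fs u) (hfb0 : ∀ u, 0 ≤ fb u)
    (hfsL : ∀ u, fs u ≤ L) (hfbL : ∀ u, fb u ≤ L)
    (hfssupp : ∀ u, u ∉ Icc (-C) C → fs u = 0)
    (hfbsupp : ∀ u, u ∉ Icc (-C) C → fb u = 0)
    (hlaws : Measure.map ξs Pr = volume.withDensity (fun u => ENNReal.ofReal (fs u)))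
    (hlawb : Measure.map ξb Pr = volume.withDensity (fun u => ENNReal.ofReal (fb u)))
    (hcents : ∫ ω, ξs ω ∂Pr = 0) (hcentb : ∫ ω, ξb ω ∂Pr = 0)
    (θs θb x : EuclideanSpace ℝ (Fin d))
    (hθs : ‖θs‖ ≤ A) (hθb : ‖θb‖ ≤ A) (hx : ‖x‖ ≤ B)
    (Fs Db I J : ℝ → ℝ)
    (hFs : ∀ u, Fs u = (Pr {ω | ξs ω ≤ u}).toReal)
    (hDb : ∀ u, Db u = (Pr {ω | u ≤ ξb ω}).toReal)
    (hI : ∀ δ', I δ' = ∫ u in δ'..C, Db u)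
    (hJ : ∀ δ', J δ' = ∫ u in (-C)..δ', Fs u)
    (EGFT : ℝ → ℝ)
    (hEGFT : ∀ q, EGFT q =
      ∫ ω, (if ⟪x, θs⟫_ℝ + ξs ω ≤ q ∧ q ≤ ⟪x, θb⟫_ℝ + ξb ω
        then (⟪x, θb⟫_ℝ + ξb ω) - (⟪x, θs⟫_ℝ + ξs ω) else 0) ∂Pr)
    (ε δ : ℝ) (hε : 0 < ε) (hδ : δ ∈ Ioo (0:ℝ) 1)
    (K : ℕ) (hK : K = ⌈2 * P / ε⌉₊ + 3)
    (θhs θhb : EuclideanSpace ℝ (Fin d))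
    (hθhs : |⟪x, θhs - θs⟫_ℝ| ≤ ε) (hθhb : |⟪x, θhb - θb⟫_ℝ| ≤ ε)
    (Ihat Jhat : ℤ → ℝ)
    (hIhat : ∀ k ∈ Finset.Icc (-(K:ℤ)) (K:ℤ), |Ihat k - I ((k:ℝ) * ε)| ≤ 2 * ε)
    (hJhat : ∀ k ∈ Finset.Icc (-(K:ℤ)) (K:ℤ), |Jhat k - J ((k:ℝ) * ε)| ≤ 2 * ε)
    (Ns Nb : ℤ → ℝ) (hNs : ∀ k, 1 ≤ Ns k) (hNb : ∀ k, 1 ≤ Nb k)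
    (Fhat Dhat : ℤ → ℝ)
    (hFhat : ∀ k ∈ Finset.Icc (-(K:ℤ)) (K:ℤ),
      |Fhat k - Fs ((k:ℝ) * ε)| ≤ Real.sqrt (2 * Real.log (1/δ) / Ns k) + L * ε)
    (hDhat : ∀ k ∈ Finset.Icc (-(K:ℤ)) (K:ℤ),
      |Dhat k - Db ((k:ℝ) * ε)| ≤ Real.sqrt (2 * Real.log (1/δ) / Nb k) + 2 * L * ε)
    (UCB LCB : ℤ × ℤ → ℝ)
    (hUCB : ∀ kk, UCB kk = Ihat kk.2 * Fhat kk.1 + Jhat kk.1 * Dhat kk.2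
      + (12 * P * L + 7) * ε
      + 2 * P * (Real.sqrt (2 * Real.log (1/δ) / Ns kk.1)
          + Real.sqrt (2 * Real.log (1/δ) / Nb kk.2)))
    (hLCB : ∀ kk, LCB kk = Ihat kk.2 * Fhat kk.1 + Jhat kk.1 * Dhat kk.2
      - (12 * P * L + 7) * ε
      - 2 * P * (Real.sqrt (2 * Real.log (1/δ) / Ns kk.1)
          + Real.sqrt (2 * Real.log (1/δ) / Nb kk.2)))
    (Agrid : Finset (ℤ × ℤ))
    (hAgrid : Agrid = (Finset.Icc (-(K:ℤ)) (K:ℤ) ×ˢ Finset.Icc (-(K:ℤ)) (K:ℤ)).filter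
      (fun kk => kk.2 = ⌊(⟪x, θhs - θhb⟫_ℝ + (kk.1 : ℝ) * ε) / ε⌋))
    -- the surviving set K_t of the successive elimination step
    (Kt : Finset (ℤ × ℤ))
    (hKt : ∀ kk, kk ∈ Kt ↔ kk ∈ Agrid ∧ ∀ ll ∈ Agrid, LCB ll ≤ UCB kk)
    -- the selected pair, minimizing min{N^{s,k}, N^{b,k'}} over the surviving set
    (kt : ℤ × ℤ) (hkt : kt ∈ Kt)
    (hktmin : ∀ ll ∈ Kt, min (Ns kt.1) (Nb kt.2) ≤ min (Ns ll.1) (Nb ll.2)) :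
    -- seller-side case: `t ∈ T^SE_{s,k}`
    (Ns kt.1 ≤ Nb kt.2 →
      sSup (EGFT '' Icc (-P) P) - EGFT (⟪x, θhs⟫_ℝ + (kt.1 : ℝ) * ε)
        ≤ (50 * P * L + 28) * ε + 16 * P * Real.sqrt (2 * Real.log (1/δ) / Ns kt.1))
    -- buyer-side case: `t ∈ T^SE_{b,k'}`
    ∧ (Nb kt.2 ≤ Ns kt.1 →
      sSup (EGFT '' Icc (-P) P) - EGFT (⟪x, θhs⟫_ℝ + (kt.1 : ℝ) * ε)
        ≤ (50 * P * L + 28) * ε + 16 * P * Real.sqrt (2 * Real.log (1/δ) / Nb kt.2)) := by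
  classical
  have hA : 0 ≤ A := (norm_nonneg _).trans hθs
  have hB : 0 ≤ B := (norm_nonneg _).trans hx
  have hM : 0 ≤ A * B := mul_nonneg hA hB
  have hL : 0 ≤ L := (hfs0 0).trans (hfsL 0)
  have hCs := law_supp hmξs hfssupp hlaws
  have hCb := law_supp hmξb hfbsupp hlawb
  obtain ⟨hC, hCL⟩ := one_le_of_law hL hCs (law_le hmξs hfsL hlaws)
  have hPC : C ≤ P := by linarith
  have hP0 : 0 ≤ P := hC.trans hPC
  -- The two sides as instances of `CdfFacts`, the buyer's one reflected.
  have hF : CdfFacts C L Fs J :=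
    cdfFacts_of_law hmξs hL hCs (law_le hmξs hfsL hlaws) hcents hFs hJ
  have hDcdf : ∀ u, Db (-u) = (Pr {ω | -ξb ω ≤ u}).toReal := fun u => by
    rw [hDb]; congr 2; ext ω
    change -u ≤ ξb ω ↔ -ξb ω ≤ u
    exact neg_le
  have hIint : ∀ y, I (-y) = ∫ u in (-C)..y, Db (-u) := fun y => by
    rw [hI, intervalIntegral.integral_comp_neg (fun u => Db u), neg_neg]
  have hCb' : ∀ᵐ ω ∂Pr, -ξb ω ∈ Icc (-C) C := by
    filter_upwards [hCb] with ω hω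
    exact ⟨by linarith [hω.2], by linarith [hω.1]⟩
  have hD : CdfFacts C L (fun u => Db (-u)) (fun u => I (-u)) := by
    refine cdfFacts_of_law (X := fun ω => -ξb ω) hmξb.neg hL hCb' (fun S hS => ?_) ?_ hDcdf hIint
    · have := law_le hmξb hfbL hlawb (-S) hS.neg
      rw [Measure.measure_neg] at this
      exact this
    · rw [integral_neg, hcentb, neg_zero]
  obtain ⟨ms, hms⟩ : ∃ r, r = ⟪x, θs⟫_ℝ := ⟨_, rfl⟩
  obtain ⟨mb, hmb⟩ : ∃ r, r = ⟪x, θb⟫_ℝ := ⟨_, rfl⟩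
  obtain ⟨hs, hhs⟩ : ∃ r, r = ⟪x, θhs⟫_ℝ := ⟨_, rfl⟩
  obtain ⟨hb, hhb⟩ : ∃ r, r = ⟪x, θhb⟫_ℝ := ⟨_, rfl⟩
  have hinner : ∀ θ : EuclideanSpace ℝ (Fin d), ‖θ‖ ≤ A → |⟪x, θ⟫_ℝ| ≤ A * B := fun θ hθ =>
    (abs_real_inner_le_norm x θ).trans
      (by rw [mul_comm A B]; exact mul_le_mul hx hθ (norm_nonneg _) hB)
  have hms' := hinner θs hθs
  have hmb' := hinner θb hθb
  simp only [inner_sub_right, ← hms, ← hmb, ← hhs, ← hhb] at *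
  rw [abs_le] at hms' hmb' hθhs hθhb
  have hEG : ∀ q, EGFT q = Fs (q - ms) * I (-(mb - q)) + Db (-(mb - q)) * J (q - ms) := fun q => by
    rw [hEGFT, egft_factor hmξs hmξb hindep hCs hCb, ← integral_cdf_eq hmξs hCs,
      ← integral_cdf_eq (X := fun ω => -ξb ω) hmξb.neg hCb', hFs, hDcdf, hIint, hJ]
    simp only [hFs, hDcdf]
  have hE0 : ∀ q, 0 ≤ EGFT q := fun q => by
    rw [hEG]
    exact add_nonneg (mul_nonneg (hF.nonneg _) (hD.J_nonneg _))
      (mul_nonneg (hD.nonneg _) (hF.J_nonneg _))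
  have hE2 : ∀ q, EGFT q ≤ 2 * P := fun q => by
    rw [hEGFT]
    have h := norm_integral_le_of_norm_le_const (μ := Pr) (C := 2 * P)
      (f := fun ω => if ms + ξs ω ≤ q ∧ q ≤ mb + ξb ω then (mb + ξb ω) - (ms + ξs ω) else 0) (by
        filter_upwards [hCs, hCb] with ω h1 h2
        split_ifs
        · rw [Real.norm_eq_abs, abs_le]
          constructor <;> linarith [h1.1, h1.2, h2.1, h2.2, hms'.1, hms'.2, hmb'.1, hmb'.2]
        · simpa using hP0)
    rw [probReal_univ, mul_one] at h
    exact (le_abs_self _).trans h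
  obtain ⟨n, hn⟩ : ∃ n, n = min (Ns kt.1) (Nb kt.2) := ⟨_, rfl⟩
  obtain ⟨W, hW⟩ : ∃ W : ℝ → ℝ, ∀ m, W m = Real.sqrt (2 * Real.log (1/δ) / m) :=
    ⟨_, fun _ => rfl⟩
  simp only [← hW] at hFhat hDhat hUCB hLCB ⊢
  have hW0 : ∀ m, 0 ≤ W m := fun m => by rw [hW]; exact Real.sqrt_nonneg _
  have hn1 : 1 ≤ n := by rw [hn]; exact le_min (hNs _) (hNb _)
  have hWn : ∀ m, n ≤ m → W m ≤ W n := fun m hm => by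
    rw [hW, hW]
    apply Real.sqrt_le_sqrt
    have : 0 ≤ Real.log (1/δ) := Real.log_nonneg (by rw [le_div_iff₀ hδ.1]; linarith [hδ.2])
    exact div_le_div_of_nonneg_left (by linarith) (by linarith) hm
  suffices key : ∀ q ∈ Icc (-P) P,
      EGFT q - EGFT (hs + (kt.1 : ℝ) * ε) ≤ (50 * P * L + 28) * ε + 16 * P * W n by
    have hsup : sSup (EGFT '' Icc (-P) P) - EGFT (hs + (kt.1 : ℝ) * ε)
        ≤ (50 * P * L + 28) * ε + 16 * P * W n := by
      rw [sub_le_iff_le_add]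
      refine csSup_le ((nonempty_Icc.2 (by linarith)).image _) ?_
      rintro _ ⟨q, hq, rfl⟩
      linarith [key q hq]
    exact ⟨fun h => by rwa [hn, min_eq_left h] at hsup,
      fun h => by rwa [hn, min_eq_right h] at hsup⟩
  rintro q ⟨hq1, hq2⟩
  -- If the claimed bound is at least `2P`, the range of the gain from trade, there is nothing to prove.
  rcases le_or_gt (2 * P) ((50 * P * L + 28) * ε + 16 * P * W n) with hbig | hsmall
  · linarith [hE2 q, hE0 (hs + (kt.1 : ℝ) * ε)]
  have hPLε : 0 ≤ P * L * ε := by positivity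
  have hPW : 0 ≤ P * W n := mul_nonneg hP0 (hW0 n)
  have hεP : 14 * ε ≤ P := by linarith
  have hPpos : 0 < P := by linarith
  have hw8 : W n ≤ 1 / 8 := by
    have : P * W n ≤ P * (1 / 8) := by linarith
    exact le_of_mul_le_mul_left this hPpos
  -- Since `2CL ≥ 1`, a nontrivial bound also forces `ε` to be small compared with `C`.
  have hεC : 25 * ε ≤ 2 * C := by
    have h1 : P * (25 * (L * ε)) ≤ P * 1 := by linarith
    have h2 : 25 * (L * ε) ≤ 1 := le_of_mul_le_mul_left h1 hPpos
    nlinarith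
  have hKε : (K : ℝ) * ε ≤ 2 * P + 4 * ε := by
    have h1 := Nat.ceil_lt_add_one (a := 2 * P / ε) (by positivity)
    have h2 : (K : ℝ) ≤ 2 * P / ε + 4 := by
      rw [hK]; push_cast; linarith
    calc (K : ℝ) * ε ≤ (2 * P / ε + 4) * ε := mul_le_mul_of_nonneg_right h2 hε.le
      _ = 2 * P + 4 * ε := by field_simp
  have hmemK : ∀ k : ℤ, |(k : ℝ) * ε| ≤ 2 * P → k ∈ Finset.Icc (-(K:ℤ)) (K:ℤ) := fun k hk => by
    have h1 : 2 * P / ε ≤ (K : ℝ) := by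
      rw [hK]; push_cast; linarith [Nat.le_ceil (2 * P / ε)]
    rw [div_le_iff₀ hε] at h1
    rw [abs_le] at hk
    rw [Finset.mem_Icc]
    constructor
    · have : (-(K:ℝ)) ≤ k := le_of_mul_le_mul_right (by linarith) hε
      exact_mod_cast this
    · have : (k:ℝ) ≤ K := le_of_mul_le_mul_right (by linarith) hε
      exact_mod_cast this
  have hfloor : ∀ k k' : ℤ, k' = ⌊(hs - hb + (k : ℝ) * ε) / ε⌋ →
      (k' : ℝ) * ε ≤ hs - hb + (k : ℝ) * ε ∧ hs - hb + (k : ℝ) * ε < (k' : ℝ) * ε + ε :=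
    fun k k' h => by
      have h1 := Int.floor_le ((hs - hb + (k : ℝ) * ε) / ε)
      have h2 := Int.lt_floor_add_one ((hs - hb + (k : ℝ) * ε) / ε)
      rw [← h, le_div_iff₀ hε] at h1
      rw [← h, div_lt_iff₀ hε] at h2
      exact ⟨h1, by linarith⟩
  -- Accuracy of the index at a grid pair, in the interior or with small widths.
  have hacc : ∀ ll ∈ Agrid,
      (((ll.1 : ℝ) * ε ≤ 2 * P - 2 * ε ∧ -((ll.2 : ℝ) * ε) ≤ 2 * P - 2 * ε) ∨
        (W (Ns ll.1) ≤ 1 / 8 ∧ W (Nb ll.2) ≤ 1 / 8)) →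
      |(Ihat ll.2 * Fhat ll.1 + Jhat ll.1 * Dhat ll.2) - EGFT (hs + (ll.1 : ℝ) * ε)|
        ≤ (12 * P * L + 7) * ε + 2 * P * (W (Ns ll.1) + W (Nb ll.2)) := by
    rintro ⟨k, k'⟩ hll hor
    rw [hAgrid, Finset.mem_filter, Finset.mem_product] at hll
    obtain ⟨⟨hk, hk'⟩, hfl⟩ := hll
    dsimp only at hk hk' hfl hor ⊢
    obtain ⟨f1, f2⟩ := hfloor k k' hfl
    have gF := hFhat k hk
    have gD : |Dhat k' - (fun u => Db (-u)) (-((k' : ℝ) * ε))| ≤ W (Nb k') + 2 * L * ε := by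
      simpa using hDhat k' hk'
    have gI : |Ihat k' - (fun u => I (-u)) (-((k' : ℝ) * ε))| ≤ 2 * ε := by
      simpa using hIhat k' hk'
    have gJ := hJhat k hk
    have hya : |(hs + (k : ℝ) * ε - ms) - (k : ℝ) * ε| ≤ ε := by
      rw [abs_le]; constructor <;> linarith
    have hzb : |(mb - (hs + (k : ℝ) * ε)) - (-((k' : ℝ) * ε))| ≤ 2 * ε := by
      rw [abs_le]; constructor <;> linarith
    have hedge : ∀ j : ℤ, j ∈ Finset.Icc (-(K:ℤ)) (K:ℤ) → |(j : ℝ) * ε| ≤ 2 * P + 4 * ε :=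
      fun j hj => by
        rw [Finset.mem_Icc] at hj
        have h1 : (-(K:ℝ)) ≤ j := by exact_mod_cast hj.1
        have h2 : (j:ℝ) ≤ K := by exact_mod_cast hj.2
        have h3 := mul_le_mul_of_nonneg_right h1 hε.le
        have h4 := mul_le_mul_of_nonneg_right h2 hε.le
        rw [abs_le]; constructor <;> linarith
    have hka := abs_le.1 (hedge k hk)
    have hkb := abs_le.1 (hedge k' hk')
    rw [hEG]
    by_cases ha : (k : ℝ) * ε ≤ 2 * P - 2 * ε
    · by_cases hb' : -((k' : ℝ) * ε) ≤ 2 * P - 2 * ε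
      · exact index_error_interior hF hD hL (by linarith) hya hzb ha hb' gF gD gI gJ
      · -- `k'ε` is so low that no seller accepts.
        obtain ⟨w1, w2⟩ := hor.resolve_left fun h => hb' h.2
        push Not at hb'
        have z1 := hF.zero ((k : ℝ) * ε) (by linarith)
        have z2 := hF.J_zero ((k : ℝ) * ε) (by linarith)
        rw [hF.zero (hs + (k : ℝ) * ε - ms) (by linarith),
          hF.J_zero (hs + (k : ℝ) * ε - ms) (by linarith), zero_mul, mul_zero, add_zero, sub_zero]
        rw [z1, sub_zero] at gF
        have gF' : |Fhat k| ≤ W (Ns k) + 1 * L * ε := by linarith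
        have := index_error_edge (κ := 2) (κ' := 1) hL hε.le hεP le_rfl (by norm_num)
          (hD.nonneg _) (hD.le_one _) z2 (hD.J_nonneg _)
          ((hD.J_le (-((k' : ℝ) * ε))).trans (max_le (by linarith) (by linarith)))
          (hW0 _) w1 gD gF' gJ gI
        rw [add_comm (Ihat k' * Fhat k), add_comm (W (Ns k))]
        exact this
    · -- `kε` is so high that no buyer accepts.
      obtain ⟨w1, w2⟩ := hor.resolve_left fun h => ha h.1
      push Not at ha
      have z1 := hD.zero (-((k' : ℝ) * ε)) (by linarith)
      have z2 := hD.J_zero (-((k' : ℝ) * ε)) (by linarith)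
      have z3 := hD.zero (mb - (hs + (k : ℝ) * ε)) (by linarith)
      have z4 := hD.J_zero (mb - (hs + (k : ℝ) * ε)) (by linarith)
      rw [z3, z4, zero_mul, mul_zero, add_zero, sub_zero]
      beta_reduce at gD
      rw [z1, sub_zero] at gD
      have gF' : |Fhat k - Fs ((k : ℝ) * ε)| ≤ W (Ns k) + 1 * L * ε := by linarith
      exact index_error_edge (κ := 1) (κ' := 2) hL hε.le hεP (by norm_num) le_rfl
        (hF.nonneg _) (hF.le_one _) z2 (hF.J_nonneg _)
        ((hF.J_le ((k : ℝ) * ε)).trans (max_le (by linarith) (by linarith)))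
        (hW0 _) w2 gF' gD gI gJ
  -- The comparison pair: the first grid price not below `q`.
  obtain ⟨k, hk⟩ : ∃ k : ℤ, k = ⌈(q - hs) / ε⌉ := ⟨_, rfl⟩
  obtain ⟨k', hk'⟩ : ∃ k' : ℤ, k' = ⌊(hs - hb + (k : ℝ) * ε) / ε⌋ := ⟨_, rfl⟩
  obtain ⟨f1, f2⟩ := hfloor k k' hk'
  have c1 : q ≤ hs + (k : ℝ) * ε := by
    have := Int.le_ceil ((q - hs) / ε)
    rw [← hk, div_le_iff₀ hε] at this
    linarith
  have c2 : hs + (k : ℝ) * ε ≤ q + ε := by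
    have := Int.ceil_lt_add_one ((q - hs) / ε)
    rw [← hk, ← sub_lt_iff_lt_add, lt_div_iff₀ hε] at this
    linarith
  have hkA : (k, k') ∈ Agrid := by
    rw [hAgrid, Finset.mem_filter, Finset.mem_product]
    refine ⟨⟨hmemK k ?_, hmemK k' ?_⟩, hk'⟩ <;> rw [abs_le] <;> constructor <;> linarith
  have hq_le : EGFT q - EGFT (hs + (k : ℝ) * ε) ≤ 2 * P * L * ε := by
    have := egft_increase (P := P) (ε := ε) (h := hs + (k : ℝ) * ε - q) (y := q - ms) (z := mb - q)
      hF hD hL (by linarith) (by linarith) (by linarith) (by linarith)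
    rw [hEG, hEG]
    convert this using 6 <;> ring_nf
  have acc1 := abs_le.1 (hacc (k, k') hkA (Or.inl ⟨by dsimp only; linarith, by dsimp only; linarith⟩))
  have hktA := (hKt kt).1 hkt
  have w1 : W (Ns kt.1) ≤ W n := hWn _ (hn ▸ min_le_left _ _)
  have w2 : W (Nb kt.2) ≤ W n := hWn _ (hn ▸ min_le_right _ _)
  have acc2 := abs_le.1 (hacc kt hktA.1 (Or.inr ⟨w1.trans hw8, w2.trans hw8⟩))
  have u1 := hUCB (k, k')
  have u2 := hLCB (k, k')
  have u3 := hUCB kt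
  dsimp only at acc1 u1 u2
  have pw1 : P * W (Ns kt.1) ≤ P * W n := mul_le_mul_of_nonneg_left w1 hP0
  have pw2 : P * W (Nb kt.2) ≤ P * W n := mul_le_mul_of_nonneg_left w2 hP0
  by_cases hsurv : (k, k') ∈ Kt
  · -- A surviving comparison pair has widths at most those of the selected pair.
    have hmin := hktmin _ hsurv
    rw [← hn] at hmin
    have w3 : P * W (Ns k) ≤ P * W n :=
      mul_le_mul_of_nonneg_left (hWn _ (hmin.trans (min_le_left _ _))) hP0
    have w4 : P * W (Nb k') ≤ P * W n :=
      mul_le_mul_of_nonneg_left (hWn _ (hmin.trans (min_le_right _ _))) hP0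
    have := hktA.2 _ hkA
    linarith
  · -- An eliminated one is dominated by a lower bound, hence by the selected pair's upper bound.
    rw [hKt] at hsurv
    push Not at hsurv
    obtain ⟨l, hl, hlt⟩ := hsurv hkA
    have := hktA.2 l hl
    linarith
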